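/- arXiv:math/0007040 — 3 statements merged into one kernel-verified Lean document; each statement's English description precedes it below -/
import Mathlib

section
/- Let V be a finite-dimensional complex vector space and N a nilpotent endomorphism of V. Then there exists at most one increasing filtration W(N) of V such that N maps W(N)_ℓ into W(N)_{ℓ-2} for all ℓ, and the induced map N^ℓ : Gr^{W(N)}_ℓ → Gr^{W(N)}_{-ℓ} is an isomorphism for all ℓ ≥ 0. -/
/-- `Wf` is an (exhaustive, separated) increasing filtration which is the monodromy weight
filtration of the nilpotent endomorphism `N`: `N` shifts the filtration by `-2` and, for each
`ℓ ≥ 0`, the map induced by `N ^ ℓ` from `Gr_ℓ` to `Gr_{-ℓ}` is an isomorphism (expressed here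
via surjectivity and injectivity modulo the lower steps of the filtration). -/
def IsWeightFiltration {K V : Type*} [Field K] [AddCommGroup V] [Module K V]
    (N : Module.End K V) (Wf : ℤ → Submodule K V) : Prop :=
  Monotone Wf ∧
  (∃ a : ℤ, ∀ k ≤ a, Wf k = ⊥) ∧
  (∃ b : ℤ, ∀ k, b ≤ k → Wf k = ⊤) ∧
  (∀ ℓ : ℤ, ∀ v ∈ Wf ℓ, N v ∈ Wf (ℓ - 2)) ∧
  (∀ ℓ : ℤ, 0 ≤ ℓ →
    ((∀ w ∈ Wf (-ℓ), ∃ v ∈ Wf ℓ, (N ^ ℓ.toNat) v - w ∈ Wf (-ℓ - 1)) ∧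
     (∀ v ∈ Wf ℓ, (N ^ ℓ.toNat) v ∈ Wf (-ℓ - 1) → v ∈ Wf (ℓ - 1))))

namespace IsWeightFiltration

variable {K V : Type*} [Field K] [AddCommGroup V] [Module K V]
  {N : Module.End K V} {W W' : ℤ → Submodule K V}

theorem pow_apply_mem (h : IsWeightFiltration N W) (n : ℕ) {k : ℤ} {v : V} (hv : v ∈ W k) :
    (N ^ n) v ∈ W (k - 2 * n) := by
  induction n with
  | zero => simpa using hv
  | succ n ih =>
    rw [pow_succ', Module.End.mul_apply]
    convert h.2.2.2.1 _ _ ih using 2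
    push_cast
    ring

theorem mem_iff (h : IsWeightFiltration N W) (n : ℕ) (v : V) :
    v ∈ W n ↔ v ∈ W (n + 1) ∧ (N ^ (n + 1)) v ∈ W (-n - 2) := by
  have hinj := (h.2.2.2.2 (n + 1) (by positivity)).2 v
  rw [show ((n : ℤ) + 1).toNat = n + 1 by omega, show -((n : ℤ) + 1) - 1 = -n - 2 by ring,
    add_sub_cancel_right] at hinj
  refine ⟨fun hv ↦ ⟨h.1 (by omega) hv, ?_⟩, fun hv ↦ hinj hv.1 hv.2⟩
  convert h.pow_apply_mem (n + 1) hv using 2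
  push_cast
  ring

theorem mem_neg_iff (h : IsWeightFiltration N W) (n : ℕ) (w : V) :
    w ∈ W (-n - 1) ↔ ∃ v ∈ W (n + 1), (N ^ (n + 1)) v - w ∈ W (-n - 2) := by
  have hsurj := (h.2.2.2.2 (n + 1) (by positivity)).1 w
  rw [show ((n : ℤ) + 1).toNat = n + 1 by omega, show -((n : ℤ) + 1) - 1 = -n - 2 by ring,
    neg_add'] at hsurj
  refine ⟨hsurj, fun ⟨v, hv, hvw⟩ ↦ ?_⟩
  have hNv : (N ^ (n + 1)) v ∈ W (-n - 1) := by
    convert h.pow_apply_mem (n + 1) hv using 2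
    push_cast
    ring
  simpa using sub_mem hNv (h.1 (by omega : -(n : ℤ) - 2 ≤ -n - 1) hvw)

theorem exists_forall_eq (h : IsWeightFiltration N W) :
    ∃ m : ℕ, ∀ n : ℕ, m ≤ n → W n = ⊤ ∧ W (-n - 1) = ⊥ := by
  obtain ⟨-, ⟨a, ha⟩, ⟨b, hb⟩, -⟩ := h
  exact ⟨a.natAbs + b.natAbs, fun n hn ↦ ⟨hb _ (by omega), ha _ (by omega)⟩⟩

theorem eq_and_eq_of_succ (h : IsWeightFiltration N W) (h' : IsWeightFiltration N W') (n : ℕ)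
    (htop : W (n + 1) = W' (n + 1)) (hbot : W (-n - 2) = W' (-n - 2)) :
    W n = W' n ∧ W (-n - 1) = W' (-n - 1) := by
  constructor <;> ext v
  · rw [h.mem_iff, h'.mem_iff, htop, hbot]
  · rw [h.mem_neg_iff, h'.mem_neg_iff, htop, hbot]

/-- A weight filtration of `N` is unique, over any field. -/
protected theorem unique (h : IsWeightFiltration N W) (h' : IsWeightFiltration N W') :
    W = W' := by
  obtain ⟨m, hm⟩ := h.exists_forall_eq
  obtain ⟨m', hm'⟩ := h'.exists_forall_eq
  have key (d : ℕ) : ∀ n : ℕ, m + m' ≤ n + d → W n = W' n ∧ W (-n - 1) = W' (-n - 1) := by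
    induction d with
    | zero =>
      intro n hn
      obtain ⟨h₁, h₂⟩ := hm n (by omega)
      obtain ⟨h₁', h₂'⟩ := hm' n (by omega)
      exact ⟨h₁.trans h₁'.symm, h₂.trans h₂'.symm⟩
    | succ d ih =>
      intro n hn
      obtain ⟨htop, hbot⟩ := ih (n + 1) (by omega)
      rw [show -((n + 1 : ℕ) : ℤ) - 1 = -n - 2 by push_cast; ring] at hbot
      exact h.eq_and_eq_of_succ h' n (by exact_mod_cast htop) hbot
  funext k
  rcases le_or_gt 0 k with hk | hk
  · lift k to ℕ using hk
    exact (key (m + m') k (by omega)).1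
  · have := (key (m + m') (-k - 1).toNat (by omega)).2
    rwa [show -((-k - 1).toNat : ℤ) - 1 = k by omega] at this

end IsWeightFiltration

/-- There is at most one monodromy weight filtration of a nilpotent endomorphism of a
finite-dimensional complex vector space. -/
theorem weight_filtration_unique {V : Type*} [AddCommGroup V] [Module ℂ V]
    [FiniteDimensional ℂ V] (N : Module.End ℂ V) (hN : IsNilpotent N)
    (W W' : ℤ → Submodule ℂ V)
    (hW : IsWeightFiltration N W) (hW' : IsWeightFiltration N W') : W = W' :=
  hW.unique hW'
end

section
/- Let W be an increasing filtration of a finite-dimensional vector space V and let N be a nilpotent endomorphism of V preserving W. Then there exists at most one increasing filtration M of V (the relative weight filtration) such that (i) N maps M_k into M_{k-2} for all k, and (ii) for each k, the filtration induced by M on Gr^W_k equals the monodromy weight filtration of the induced nilpotent map N on Gr^W_k, shifted by k (i.e. M induces W(N : Gr^W_k → Gr^W_k)[-k]). -/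
section
variable {K V : Type*} [Field K] [AddCommGroup V] [Module K V]

/-- The graded piece `Gr^W_k = W_k / W_{k-1}`. -/
abbrev GrPiece (W : ℤ → Submodule K V) (k : ℤ) :=
  W k ⧸ (Submodule.comap (W k).subtype (W (k - 1)))

/-- The endomorphism induced on `Gr^W_k` by an endomorphism `N` preserving `W`. -/
noncomputable def grEnd (W : ℤ → Submodule K V) (N : Module.End K V) (k : ℤ)
    (h1 : ∀ x ∈ W k, N x ∈ W k) (h2 : ∀ x ∈ W (k - 1), N x ∈ W (k - 1)) :
    Module.End K (GrPiece W k) :=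
  Submodule.mapQ _ _ (N.restrict h1) (by
    intro x hx
    simp only [Submodule.mem_comap, LinearMap.restrict_apply] at *
    exact h2 _ hx)

/-- The filtration induced by `M` on `Gr^W_k` (image of `M j ∩ W k`). -/
def inducedFil (W M : ℤ → Submodule K V) (k j : ℤ) : Submodule K (GrPiece W k) :=
  ((M j).comap (W k).subtype).map (Submodule.mkQ _)

/-- `M` is a relative weight filtration of `N` with respect to `W`:
`N` shifts `M` by `-2`, and `M` induces on each `Gr^W_k` the monodromy weight filtration of the
induced nilpotent endomorphism, shifted by `k` (`M` induces `W(N : Gr^W_k → Gr^W_k)[-k]`,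
i.e. `j ↦ (induced filtration)_{j+k}` is the monodromy weight filtration on `Gr^W_k`). -/
def IsRelWeightFiltration (W : ℤ → Submodule K V) (N : Module.End K V)
    (hNW : ∀ k, ∀ x ∈ W k, N x ∈ W k) (M : ℤ → Submodule K V) : Prop :=
  Monotone M ∧
  (∃ a : ℤ, ∀ k ≤ a, M k = ⊥) ∧
  (∃ b : ℤ, ∀ k, b ≤ k → M k = ⊤) ∧
  (∀ k : ℤ, ∀ v ∈ M k, N v ∈ M (k - 2)) ∧
  (∀ k : ℤ, IsWeightFiltration (grEnd W N k (hNW k) (hNW (k - 1)))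
      (fun j => inducedFil W M k (j + k)))

end

section
variable {K V : Type*} [Field K] [AddCommGroup V] [Module K V]
  {W : ℤ → Submodule K V} {N : Module.End K V} {M M' : ℤ → Submodule K V}

theorem mk_mem_inducedFil_iff {k j : ℤ} (v : W k) :
    (Submodule.Quotient.mk v : GrPiece W k) ∈ inducedFil W M k j ↔
      ∃ u ∈ M j, u ∈ W k ∧ (v : V) - u ∈ W (k - 1) := by
  constructor
  · rintro ⟨u, hu, huv⟩
    refine ⟨u, hu, u.2, ?_⟩
    rw [Submodule.mkQ_apply, eq_comm, Submodule.Quotient.eq] at huv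
    exact huv
  · rintro ⟨u, hu, huW, huv⟩
    refine ⟨⟨u, huW⟩, hu, ?_⟩
    rw [Submodule.mkQ_apply, eq_comm, Submodule.Quotient.eq]
    exact huv

theorem pow_apply_mem {p : Submodule K V} (hN : ∀ x ∈ p, N x ∈ p) (m : ℕ) {x : V} (hx : x ∈ p) :
    (N ^ m) x ∈ p := by
  induction m with
  | zero => simpa using hx
  | succ m ih => rw [pow_succ', Module.End.mul_apply]; exact hN _ ih

theorem grEnd_pow_mk {k : ℤ} (h1 : ∀ x ∈ W k, N x ∈ W k) (h2 : ∀ x ∈ W (k - 1), N x ∈ W (k - 1))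
    (m : ℕ) (v : W k) :
    (grEnd W N k h1 h2 ^ m) (Submodule.Quotient.mk v) =
      Submodule.Quotient.mk ⟨(N ^ m) v, pow_apply_mem h1 m v.2⟩ := by
  induction m with
  | zero => rfl
  | succ m ih =>
    rw [pow_succ', Module.End.mul_apply, ih]
    refine congrArg Submodule.Quotient.mk (Subtype.ext ?_)
    simp [pow_succ']

theorem pow_apply_mem_sub_two_mul (hN : ∀ k : ℤ, ∀ v ∈ M k, N v ∈ M (k - 2)) (m : ℕ) {j : ℤ}
    {v : V} (hv : v ∈ M j) : (N ^ m) v ∈ M (j - 2 * m) := by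
  induction m with
  | zero => simpa using hv
  | succ m ih =>
    rw [pow_succ', Module.End.mul_apply]
    convert hN _ _ ih using 2
    push_cast; ring

namespace IsRelWeightFiltration

variable {hNW : ∀ k, ∀ x ∈ W k, N x ∈ W k}

/-- Injectivity of `N ^ m` on graded pieces, lifted to representatives. -/
theorem exists_sub_mem_of_pow_mem (hM : IsRelWeightFiltration W N hNW M) {k : ℤ} (m : ℕ) {v : V}
    (hvW : v ∈ W k) (hv : v ∈ M (k + m)) (hNv : (N ^ m) v ∈ M (k - m - 1)) :
    ∃ u ∈ M (k + m - 1), u ∈ W k ∧ v - u ∈ W (k - 1) := by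
  obtain ⟨-, -, -, -, hgr⟩ := hM
  have h := ((hgr k).2.2.2.2 m (by positivity)).2 (Submodule.Quotient.mk ⟨v, hvW⟩)
  simp only [Int.toNat_natCast, grEnd_pow_mk, mk_mem_inducedFil_iff] at h
  rw [show (m : ℤ) + k = k + m by ring, show -(m : ℤ) - 1 + k = k - m - 1 by ring,
    show (m : ℤ) - 1 + k = k + m - 1 by ring] at h
  exact h ⟨v, hv, hvW, by simp⟩ ⟨_, hNv, pow_apply_mem (hNW k) m hvW, by simp⟩

theorem exists_pow_sub_sub_mem (hM : IsRelWeightFiltration W N hNW M) {k : ℤ} (m : ℕ) {w : V}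
    (hwW : w ∈ W k) (hw : w ∈ M (k - m)) :
    ∃ v ∈ M (k + m), v ∈ W k ∧ ∃ u ∈ M (k - m - 1), u ∈ W k ∧ (N ^ m) v - w - u ∈ W (k - 1) := by
  obtain ⟨-, -, -, -, hgr⟩ := hM
  have h := ((hgr k).2.2.2.2 m (by positivity)).1 (Submodule.Quotient.mk ⟨w, hwW⟩)
  simp only [mk_mem_inducedFil_iff] at h
  rw [show -(m : ℤ) + k = k - m by ring, show -(m : ℤ) - 1 + k = k - m - 1 by ring,
    show (m : ℤ) + k = k + m by ring] at h
  obtain ⟨x, ⟨v, hv, rfl⟩, hx⟩ := h ⟨w, hw, hwW, by simp⟩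
  rw [Submodule.mkQ_apply, Int.toNat_natCast, grEnd_pow_mk, ← Submodule.Quotient.mk_sub,
    mk_mem_inducedFil_iff] at hx
  exact ⟨v, hv, v.2, hx⟩

/-- Surjectivity of `N ^ m` onto the induced filtration of `Gr^W_k`, lifted to representatives. -/
theorem exists_sub_pow_mem (hM : IsRelWeightFiltration W N hNW M) {k : ℤ} (m : ℕ) {w : V}
    (hwW : w ∈ W k) (hw : w ∈ M (k - m)) :
    ∃ v ∈ M (k + m), v ∈ W k ∧ w - (N ^ m) v ∈ W (k - 1) := by
  obtain ⟨a, ha⟩ := hM.2.1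
  suffices H : ∀ n m : ℕ, k - a ≤ m + n → ∀ w ∈ W k, w ∈ M (k - m) →
      ∃ v ∈ M (k + m), v ∈ W k ∧ w - (N ^ m) v ∈ W (k - 1) from
    H (k - a).toNat m (by omega) w hwW hw
  intro n
  induction n with
  | zero =>
    intro m hm w _ hw
    rw [ha _ (by push_cast at hm; omega), Submodule.mem_bot] at hw
    exact ⟨0, zero_mem _, zero_mem _, by simp [hw]⟩
  | succ n ih =>
    intro m hm w hwW hw
    obtain ⟨v, hv, hvW, u, hu, huW, h⟩ := hM.exists_pow_sub_sub_mem m hwW hw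
    obtain ⟨v', hv', hvW', h'⟩ := ih (m + 1) (by push_cast at hm ⊢; omega) u huW
      (by convert hu using 2; push_cast; ring)
    refine ⟨v - N v', sub_mem hv (hM.1 (by push_cast; omega) (hM.2.2.2.1 _ _ hv')),
      sub_mem hvW (hNW k _ hvW'), ?_⟩
    convert neg_mem (add_mem h h') using 1
    rw [pow_succ, Module.End.mul_apply, map_sub]
    abel

/-- `M j` contains the preimage of `M (j - 2 * m)` under `N ^ m` on `W k` when `k + m ≤ j + 1`. -/
theorem mem_of_pow_mem (hM : IsRelWeightFiltration W N hNW M) (hWbot : ∃ a : ℤ, ∀ k ≤ a, W k = ⊥)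
    {k j : ℤ} (m : ℕ) (hj : k + m ≤ j + 1) {v : V} (hvW : v ∈ W k)
    (hNv : (N ^ m) v ∈ M (j - 2 * m)) : v ∈ M j := by
  obtain ⟨a, ha⟩ := hWbot
  obtain ⟨b, hb⟩ := hM.2.2.1
  suffices H : ∀ n : ℕ, ∀ k j : ℤ, k ≤ a + n → k + m ≤ j + 1 → ∀ v ∈ W k,
      (N ^ m) v ∈ M (j - 2 * m) → v ∈ M j from
    H (k - a).toNat k j (by omega) hj v hvW hNv
  intro n
  induction n with
  | zero =>
    intro k j hk _ v hvW _
    rw [ha k (by push_cast at hk; omega), Submodule.mem_bot] at hvW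
    simp [hvW]
  | succ n ih =>
    intro k j hk hj v hvW hNv
    suffices H : ∀ d : ℕ, v ∈ M (j + d) → v ∈ M j from
      H (b - j).toNat (by rw [hb _ (by omega)]; trivial)
    intro d
    induction d with
    | zero => simp
    | succ d ihd =>
      intro hv
      apply ihd
      obtain ⟨e, he⟩ : ∃ e : ℕ, j + (d + 1 : ℕ) = k + (e + m : ℕ) :=
        ⟨(j + d + 1 - k - m).toNat, by push_cast; omega⟩
      rw [he] at hv
      have hpow : (N ^ (e + m)) v ∈ M (k - (e + m : ℕ) - 1) := by
        rw [pow_add, Module.End.mul_apply]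
        exact hM.1 (by push_cast at he ⊢; omega) (pow_apply_mem_sub_two_mul hM.2.2.2.1 e hNv)
      obtain ⟨u, hu, huW, h⟩ := hM.exists_sub_mem_of_pow_mem (e + m) hvW hv hpow
      rw [show k + ((e + m : ℕ) : ℤ) - 1 = j + d by push_cast at he ⊢; omega] at hu
      have hvu : v - u ∈ M (j + d) := by
        refine ih (k - 1) (j + d) (by push_cast at hk; omega) (by omega) _ h ?_
        rw [map_sub]
        exact sub_mem (hM.1 (by omega) hNv) (pow_apply_mem_sub_two_mul hM.2.2.2.1 m hu)
      simpa using add_mem hvu hu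

theorem le (hWbot : ∃ a : ℤ, ∀ k ≤ a, W k = ⊥) (hWtop : ∃ b : ℤ, ∀ k, b ≤ k → W k = ⊤)
    (hM : IsRelWeightFiltration W N hNW M) (hM' : IsRelWeightFiltration W N hNW M') : M ≤ M' := by
  obtain ⟨a, ha⟩ := hWbot
  obtain ⟨b, hb⟩ := hWtop
  obtain ⟨a₁, ha₁⟩ := hM.2.1
  obtain ⟨b₁, hb₁⟩ := hM'.2.2.1
  suffices H : ∀ n : ℕ, ∀ k j : ℤ, k ≤ a + n → ∀ v ∈ W k, v ∈ M j → v ∈ M' j from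
    fun j v hv => H (b - a).toNat b j (by omega) v (by rw [hb b le_rfl]; trivial) hv
  intro n
  induction n with
  | zero =>
    intro k j hk v hvW _
    rw [ha k (by push_cast at hk; omega), Submodule.mem_bot] at hvW
    simp [hvW]
  | succ n ih =>
    intro k j hk
    have key : ∀ d m : ℕ, k - a₁ ≤ m + d → b₁ - k ≤ m + d → ∀ v ∈ W k,
        (v ∈ M (k + m) → v ∈ M' (k + m)) ∧ (v ∈ M (k - m) → v ∈ M' (k - m)) := by
      intro d
      induction d with
      | zero =>
        intro m h₁ h₂ v _
        push_cast at h₁ h₂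
        rw [hb₁ (k + m) (by omega), ha₁ (k - m) (by omega)]
        refine ⟨fun _ => trivial, fun h => ?_⟩
        rw [Submodule.mem_bot] at h
        simp [h]
      | succ d ihd =>
        intro m h₁ h₂
        push_cast at h₁ h₂
        have hplus : ∀ v ∈ W k, v ∈ M (k + m) → v ∈ M' (k + m) := by
          intro v hvW hv
          refine hM'.mem_of_pow_mem ⟨a, ha⟩ (m + 1) (by push_cast; omega) hvW ?_
          have := (ihd (m + 2) (by push_cast; omega) (by push_cast; omega) _
            (pow_apply_mem (hNW k) (m + 1) hvW)).2
          rw [show k - ((m + 2 : ℕ) : ℤ) = k + m - 2 * (m + 1 : ℕ) by push_cast; ring] at this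
          exact this (pow_apply_mem_sub_two_mul hM.2.2.2.1 _ hv)
        refine fun w hwW => ⟨hplus w hwW, fun hw => ?_⟩
        obtain ⟨v, hv, hvW, h⟩ := hM.exists_sub_pow_mem m hwW hw
        have hpow := pow_apply_mem_sub_two_mul hM.2.2.2.1 m hv
        have hpow' := pow_apply_mem_sub_two_mul hM'.2.2.2.1 m (hplus v hvW hv)
        rw [show k + (m : ℤ) - 2 * m = k - m by ring] at hpow hpow'
        simpa using add_mem
          (ih (k - 1) (k - m) (by push_cast at hk; omega) _ h (sub_mem hw hpow)) hpow'
    intro v hvW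
    have hv := key ((k - a₁).toNat + (b₁ - k).toNat) (j - k).natAbs
      (by omega) (by omega) v hvW
    rcases le_total k j with hkj | hkj
    · rw [show k + ((j - k).natAbs : ℤ) = j by omega] at hv
      exact hv.1
    · rw [show k - ((j - k).natAbs : ℤ) = j by omega] at hv
      exact hv.2

end IsRelWeightFiltration

end


/-- There is at most one relative weight filtration of a nilpotent endomorphism `N` preserving
an increasing filtration `W` of a finite-dimensional vector space in characteristic zero. -/
theorem relative_weight_filtration_unique {K V : Type*} [Field K] [CharZero K]
    [AddCommGroup V] [Module K V] [FiniteDimensional K V]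
    (W : ℤ → Submodule K V) (hWmono : Monotone W)
    (hWbot : ∃ a : ℤ, ∀ k ≤ a, W k = ⊥) (hWtop : ∃ b : ℤ, ∀ k, b ≤ k → W k = ⊤)
    (N : Module.End K V) (hNnil : IsNilpotent N)
    (hNW : ∀ k, ∀ x ∈ W k, N x ∈ W k)
    (M M' : ℤ → Submodule K V)
    (hM : IsRelWeightFiltration W N hNW M)
    (hM' : IsRelWeightFiltration W N hNW M') : M = M' := by
  exact le_antisymm (hM.le hWbot hWtop hM') (hM'.le hWbot hWtop hM)
end

section
/- Let g be a finite-dimensional nilpotent Lie algebra of endomorphisms of a vector space V, with a decreasing chain of ideals g = Lie_{-1} ⊇ Lie_{-2} ⊇ ⋯ ⊇ Lie_{-r} = 0 satisfying [Lie_{-p}, Lie_{-q}] ⊆ Lie_{-p-q}, and suppose g = a ⊕ b ⊕ c as a direct sum of vector subspaces, where a, b, c are Lie subalgebras each compatible with the filtration. Then for every α ∈ g there exist γ ∈ a, λ ∈ b, φ ∈ c such that exp(α) = exp(γ)exp(λ)exp(φ), and moreover γ ≡ π_a(α), λ ≡ π_b(α), φ ≡ π_c(α) modulo Lie_{-2},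 where π_a, π_b, π_c are the projections associated to the direct sum decomposition. -/
/-- Truncated exponential, equal to the exponential for nilpotent endomorphisms of a
finite-dimensional space. -/
noncomputable def expNil {V : Type*} [AddCommGroup V] [Module ℂ V] (α : Module.End ℂ V) :
    Module.End ℂ V :=
  ∑ i ∈ Finset.range (Module.finrank ℂ V + 1), ((i.factorial : ℂ))⁻¹ • α ^ i

open Polynomial IsNilpotent

section ExpConj
variable {B : Type*} [Ring B] [Algebra ℚ B]

theorem exp_conj_eq {x : B} (hx : IsNilpotent x) (w : B) :
    exp (LinearMap.mulLeft ℚ x + LinearMap.mulRight ℚ (-x)) w = exp x * w * exp (-x) := by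
  have hl : exp (LinearMap.mulLeft ℚ x) = LinearMap.mulLeft ℚ (exp x) :=
    (map_exp hx (Algebra.lmul ℚ B)).symm
  have hl' : IsNilpotent (LinearMap.mulLeft ℚ x) := hx.map (Algebra.lmul ℚ B)
  have hr' : IsNilpotent (LinearMap.mulRight ℚ (-x)) := by
    rw [LinearMap.isNilpotent_mulRight_iff]; exact hx.neg
  have hr : exp (LinearMap.mulRight ℚ (-x)) = LinearMap.mulRight ℚ (exp (-x)) := by
    obtain ⟨k, hk⟩ := hx.neg
    have hk' : LinearMap.mulRight ℚ (-x) ^ k = 0 := by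
      rw [LinearMap.pow_mulRight, hk, LinearMap.mulRight_zero_eq_zero]
    rw [exp_eq_sum hk, exp_eq_sum hk']
    ext w
    simp [LinearMap.pow_mulRight, Finset.mul_sum, -LinearMap.mulRight_apply,
      LinearMap.mulRight_apply]
  rw [exp_add_of_commute (LinearMap.commute_mulLeft_right (R := ℚ) x (-x)) hl' hr', hl, hr]
  simp [mul_assoc]

theorem exp_conj_sub_mem {x : B} (hx : IsNilpotent x) {S T : Submodule ℚ B} (hTS : T ≤ S)
    (h : ∀ w ∈ S, x * w - w * x ∈ T) {w : B} (hw : w ∈ S) :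
    exp x * w * exp (-x) - w ∈ T := by
  rw [← exp_conj_eq hx]
  set D := LinearMap.mulLeft ℚ x + LinearMap.mulRight ℚ (-x) with hD
  have hDn : IsNilpotent D := by
    refine (LinearMap.commute_mulLeft_right (R := ℚ) x (-x)).isNilpotent_add
      (hx.map (Algebra.lmul ℚ B)) ?_
    rw [LinearMap.isNilpotent_mulRight_iff]; exact hx.neg
  have hDS : ∀ w ∈ S, D w ∈ T := fun w hw => by
    have := h w hw
    simpa [hD, sub_eq_add_neg] using this
  have hpow : ∀ i, (D ^ (i + 1)) w ∈ T := by
    intro i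
    induction i with
    | zero => simpa using hDS w hw
    | succ i ih => rw [_root_.pow_succ']; exact hDS _ (hTS ih)
  obtain ⟨k, hk⟩ := hDn
  rw [exp_eq_sum (pow_eq_zero_of_le (Nat.le_succ k) hk), Finset.sum_range_succ']
  simp only [LinearMap.add_apply, LinearMap.sum_apply, LinearMap.smul_apply]
  simp only [Nat.factorial_zero, Nat.cast_one, inv_one, pow_zero, Module.End.one_apply, one_smul,
    add_sub_cancel_right]
  exact T.sum_mem fun i _ => T.smul_mem _ (hpow i)

theorem exp_conj {x y : B} (hx : IsNilpotent x) (hy : IsNilpotent y) :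
    exp x * exp y * exp (-x) = exp (exp x * y * exp (-x)) := by
  let u : Bˣ := ⟨exp x, exp (-x), exp_mul_exp_neg_self hx, exp_neg_mul_exp_self hx⟩
  exact map_exp hy (MulSemiringAction.toRingHom (ConjAct Bˣ) B (ConjAct.toConjAct u))

theorem commute_exp_left {x y : B} (h : Commute x y) : Commute (exp x) y :=
  Commute.sum_left _ _ _ fun i _ => (h.pow_left i).smul_left _

end ExpConj

section PolynomialPaths
variable {A : Type*} [Ring A]

/-- Evaluation at `1`, a ring homomorphism even for noncommutative coefficients. -/
noncomputable def evalOne : A[X] →+* A :=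
  eval₂RingHom' (RingHom.id A) 1 fun a => Commute.one_right a

@[simp] theorem evalOne_monomial (n : ℕ) (x : A) : evalOne (monomial n x) = x := by
  simp [evalOne, eval₂RingHom']

@[simp] theorem evalOne_C (x : A) : evalOne (C x) = x := evalOne_monomial 0 x

theorem isNilpotent_monomial {x : A} (hx : IsNilpotent x) (n : ℕ) :
    IsNilpotent (monomial n x) := by
  obtain ⟨k, hk⟩ := hx
  exact ⟨k, by simp [monomial_pow, hk]⟩

variable [Algebra ℚ A]

theorem derivative_exp {p : A[X]} (hp : IsNilpotent p) (hc : Commute p (derivative p)) :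
    derivative (exp p) = derivative p * exp p := by
  have hpow : ∀ i, derivative (p ^ (i + 1)) = ((i + 1 : ℕ) : ℚ) • (derivative p * p ^ i) := by
    intro i
    induction i with
    | zero => simp
    | succ i ih =>
      rw [_root_.pow_succ, derivative_mul, ih, smul_mul_assoc, mul_assoc, ← _root_.pow_succ,
        (hc.pow_left (i + 1)).eq]
      push_cast
      module
  obtain ⟨k, hk⟩ := hp
  conv_lhs => rw [exp_eq_sum (pow_eq_zero_of_le (Nat.le_succ k) hk), Finset.sum_range_succ']
  rw [exp_eq_sum hk, map_add, map_sum, Finset.mul_sum]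
  simp only [pow_zero, derivative_smul, derivative_one, smul_zero, add_zero]
  refine Finset.sum_congr rfl fun i _ => ?_
  rw [hpow, smul_smul, mul_smul_comm, Nat.factorial_succ]
  congr 1
  push_cast
  field_simp

theorem evalOne_exp_monomial {x : A} (hx : IsNilpotent x) (n : ℕ) :
    evalOne (exp (monomial n x)) = exp x := by
  rw [map_exp (isNilpotent_monomial hx n), evalOne_monomial]

theorem constantCoeff_exp_monomial {x : A} (hx : IsNilpotent x) (n : ℕ) :
    constantCoeff (exp (monomial (n + 1) x)) = 1 := by
  rw [map_exp (isNilpotent_monomial hx _)]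
  simp [coeff_monomial]

theorem derivative_exp_monomial {x : A} (hx : IsNilpotent x) (n : ℕ) :
    derivative (exp (monomial n x)) = derivative (monomial n x) * exp (monomial n x) := by
  refine derivative_exp (isNilpotent_monomial hx n) ?_
  rw [derivative_monomial]
  simp only [Commute, SemiconjBy, monomial_mul_monomial, mul_assoc, Nat.cast_comm]
  rw [add_comm]

/-- Polynomials all of whose coefficients lie in `S`. -/
def coeffsIn (S : Submodule ℚ A) : Submodule ℚ A[X] where
  carrier := {p | ∀ i, p.coeff i ∈ S}
  add_mem' hp hq i := by simpa using S.add_mem (hp i) (hq i)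
  zero_mem' i := by simp
  smul_mem' c p hp i := by simpa using S.smul_mem c (hp i)

theorem coeffsIn_mono {S T : Submodule ℚ A} (h : S ≤ T) : coeffsIn S ≤ coeffsIn T :=
  fun _ hp i => h (hp i)

theorem monomial_mem_coeffsIn {S : Submodule ℚ A} {x : A} (hx : x ∈ S) (n : ℕ) :
    monomial n x ∈ coeffsIn S := fun i => by
  rw [coeff_monomial]
  split_ifs
  exacts [hx, S.zero_mem]

theorem commutator_mem_coeffsIn {S T U : Submodule ℚ A}
    (h : ∀ x ∈ S, ∀ y ∈ T, x * y - y * x ∈ U) {p q : A[X]} (hp : p ∈ coeffsIn S)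
    (hq : q ∈ coeffsIn T) : p * q - q * p ∈ coeffsIn U := fun n => by
  rw [coeff_sub, coeff_mul, coeff_mul, ← Finset.Nat.sum_antidiagonal_swap, ← Finset.sum_sub_distrib]
  exact U.sum_mem fun i _ => h _ (hp _) _ (hq _)

/-- A decreasing filtration, terminating at zero, compatible with commutators, and starting
(in degree one) with nilpotent elements. -/
structure IsNilpotentFiltration (L : ℕ → Submodule ℚ A) (r : ℕ) : Prop where
  isNilpotent : ∀ x ∈ L 1, IsNilpotent x
  antitone : Antitone L
  eq_bot : L r = ⊥
  commutator_mem : ∀ p q, ∀ x ∈ L p, ∀ y ∈ L q, x * y - y * x ∈ L (p + q)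

/-- Every polynomial path starting at `1` whose logarithmic derivative has coefficients in `S`
ends in the exponential of `S`. -/
def PathsEndInExp (S : Submodule ℚ A) : Prop :=
  ∀ G w : A[X], w ∈ coeffsIn S → derivative G = w * G → constantCoeff G = 1 →
    ∃ z ∈ S, evalOne G = exp z

namespace IsNilpotentFiltration

variable {L : ℕ → Submodule ℚ A} {r : ℕ}

theorem isNilpotent_of_mem (hL : IsNilpotentFiltration L r) {k : ℕ} (hk : 1 ≤ k) {x : A}
    (hx : x ∈ L k) : IsNilpotent x :=
  hL.isNilpotent x (hL.antitone hk hx)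

theorem conj_sub_mem (hL : IsNilpotentFiltration L r) {k : ℕ} {x w : A} (hx : x ∈ L 1)
    (hw : w ∈ L k) : exp x * w * exp (-x) - w ∈ L (k + 1) :=
  exp_conj_sub_mem (hL.isNilpotent x hx) (hL.antitone (show k ≤ k + 1 by omega))
    (fun w hw => add_comm 1 k ▸ hL.commutator_mem 1 k x hx w hw) hw

theorem conj_monomial_sub_mem (hL : IsNilpotentFiltration L r) {k : ℕ} {x : A} (n : ℕ)
    (hx : x ∈ L 1) {w : A[X]} (hw : w ∈ coeffsIn (L k)) :
    exp (monomial n x) * w * exp (-monomial n x) - w ∈ coeffsIn (L (k + 1)) :=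
  exp_conj_sub_mem (isNilpotent_monomial (hL.isNilpotent x hx) n)
    (coeffsIn_mono (hL.antitone (show k ≤ k + 1 by omega)))
    (fun _ hw => add_comm 1 k ▸ commutator_mem_coeffsIn (hL.commutator_mem 1 k)
      (monomial_mem_coeffsIn hx n) hw) hw

theorem exists_exp_mul_exp_eq (hL : IsNilpotentFiltration L r) {k : ℕ} (hk : 1 ≤ k)
    (hpath : PathsEndInExp (L (k + 1))) {z e : A} (hz : z ∈ L k) (he : e ∈ L 1) :
    ∃ ζ ∈ L (k + 1), exp z * exp e = exp ζ * exp (e + z) := by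
  have hz1 : z ∈ L 1 := hL.antitone hk hz
  have hez : e + z ∈ L 1 := add_mem he hz1
  have nz := hL.isNilpotent z hz1
  have ne := hL.isNilpotent e he
  have nez := hL.isNilpotent _ hez
  have pz := isNilpotent_monomial nz 1
  have pe := isNilpotent_monomial ne 1
  have hD : ∀ x : A, derivative (monomial 1 x) = C x := fun x => by simp
  set U := exp (monomial 1 z) with hU
  set U' := exp (-monomial 1 z) with hU'
  set E := exp (monomial 1 e) with hE
  set E' := exp (-monomial 1 e) with hE'
  set S := exp (monomial 1 (-(e + z))) with hS
  have dU : derivative U = C z * U := by rw [hU, derivative_exp_monomial nz, hD]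
  have dE : derivative E = C e * E := by rw [hE, derivative_exp_monomial ne, hD]
  have dS : derivative S = -(C e + C z) * S := by
    rw [hS, derivative_exp_monomial nez.neg, hD, C_neg, C_add]
  have cE : C e * E = E * C e := by
    refine (commute_exp_left ?_).symm
    simp [Commute, SemiconjBy, C_mul_monomial, monomial_mul_C]
  have hUU : U' * U = 1 := exp_neg_mul_exp_self pz
  have hEE : E' * E = 1 := exp_neg_mul_exp_self pe
  have hw : C z - U * (E * C z * E') * U' ∈ coeffsIn (L (k + 1)) := by
    have hc : C z ∈ coeffsIn (L k) := monomial_mem_coeffsIn hz 0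
    have h1 := hL.conj_monomial_sub_mem 1 he hc
    have h1' : E * C z * E' ∈ coeffsIn (L k) := by
      have := add_mem (coeffsIn_mono (hL.antitone (Nat.le_succ k)) h1) hc
      simpa using this
    have h2 := hL.conj_monomial_sub_mem 1 hz1 h1'
    have := neg_mem (add_mem h1 h2)
    convert this using 1
    abel
  have hG : derivative (U * E * S) = (C z - U * (E * C z * E') * U') * (U * E * S) := by
    rw [derivative_mul, derivative_mul, dU, dE, dS]
    have h3 : U * (E * C z * E') * U' * (U * E * S) = U * E * C z * S := by
      calc _ = U * E * C z * E' * (U' * U) * E * S := by noncomm_ring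
        _ = U * E * C z * (E' * E) * S := by rw [hUU]; noncomm_ring
        _ = _ := by rw [hEE]; noncomm_ring
    rw [sub_mul, h3, cE]
    noncomm_ring
  have h0 : constantCoeff (U * E * S) = 1 := by
    rw [map_mul, map_mul, hU, hE, hS, constantCoeff_exp_monomial nz 0,
      constantCoeff_exp_monomial ne 0, constantCoeff_exp_monomial nez.neg 0, one_mul, one_mul]
  obtain ⟨ζ, hζ, h⟩ := hpath _ _ hw hG h0
  refine ⟨ζ, hζ, ?_⟩
  rw [map_mul, map_mul, hU, hE, hS, evalOne_exp_monomial nz, evalOne_exp_monomial ne,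
    evalOne_exp_monomial nez.neg] at h
  rw [← h, mul_assoc _ (exp (-(e + z))), exp_neg_mul_exp_self nez, mul_one]

theorem pathsEndInExp_bot : PathsEndInExp (⊥ : Submodule ℚ A) := by
  intro G w hw hG h0
  have hw0 : w = 0 := by ext i; simpa using hw i
  have : IsAddTorsionFree A := IsAddTorsionFree.of_module_rat A
  rw [hw0, zero_mul] at hG
  refine ⟨0, zero_mem _, ?_⟩
  rw [eq_C_of_derivative_eq_zero hG, evalOne_C, exp_zero]
  simpa using h0

theorem pathsEndInExp_of_succ (hL : IsNilpotentFiltration L r) {k : ℕ} (hk : 1 ≤ k)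
    (hpath : PathsEndInExp (L (k + 1)))
    (hmul : ∀ x ∈ L k, ∀ y ∈ L k, ∃ z ∈ L k, exp x * exp y = exp z) :
    PathsEndInExp (L k) := by
  have hle : L (k + 1) ≤ L k := hL.antitone (Nat.le_succ k)
  have key : ∀ d : ℕ, ∀ G w : A[X], w ∈ coeffsIn (L k) → (∀ i, d ≤ i → w.coeff i ∈ L (k + 1)) →
      derivative G = w * G → constantCoeff G = 1 → ∃ z ∈ L k, evalOne G = exp z := by
    intro d
    induction d with
    | zero =>
      intro G w _ hw hG h0
      obtain ⟨z, hz, h⟩ := hpath G w (fun i => hw i (Nat.zero_le i)) hG h0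
      exact ⟨z, hle hz, h⟩
    | succ d ih =>
      intro G w hw hwd hG h0
      set x : A := (-((d : ℚ) + 1)⁻¹) • w.coeff d with hx
      have hxk : x ∈ L k := (L k).smul_mem _ (hw d)
      have nx := hL.isNilpotent_of_mem hk hxk
      have px := isNilpotent_monomial nx (d + 1)
      set U := exp (monomial (d + 1) x) with hU
      set U' := exp (-monomial (d + 1) x) with hU'
      have hUU : U' * U = 1 := exp_neg_mul_exp_self px
      have hDx : derivative (monomial (d + 1) x) = -monomial d (w.coeff d) := by
        rw [derivative_monomial, ← monomial_neg]
        congr 1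
        have : x * ((d + 1 : ℕ) : A) = ((d : ℚ) + 1) • x := by
          rw [← nsmul_eq_mul', ← Nat.cast_smul_eq_nsmul ℚ]
          push_cast; rfl
        rw [this, hx, smul_smul]
        have : ((d : ℚ) + 1) ≠ 0 := by positivity
        simp [this]
      have dU : derivative U = -monomial d (w.coeff d) * U := by
        rw [hU, derivative_exp_monomial nx, hDx]
      have hconj := hL.conj_monomial_sub_mem (d + 1) (hL.antitone hk hxk) hw
      have hw' : U * w * U' - monomial d (w.coeff d) ∈ coeffsIn (L k) := by
        have := sub_mem (add_mem (coeffsIn_mono hle hconj) hw)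
          (monomial_mem_coeffsIn (hw d) d)
        rwa [sub_add_cancel] at this
      have hwd' : ∀ i, d ≤ i → (U * w * U' - monomial d (w.coeff d)).coeff i ∈ L (k + 1) := by
        intro i hi
        have h1 : (w - monomial d (w.coeff d)).coeff i ∈ L (k + 1) := by
          rw [coeff_sub, coeff_monomial]
          split_ifs with hid
          · subst hid; simp
          · simpa using hwd i (by omega)
        have := add_mem (hconj i) h1
        rwa [← coeff_add, sub_add_sub_cancel] at this
      have hG' : derivative (U * G) = (U * w * U' - monomial d (w.coeff d)) * (U * G) := by
        have : U * w * U' * (U * G) = U * w * G := by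
          calc _ = U * w * (U' * U) * G := by noncomm_ring
            _ = _ := by rw [hUU, mul_one]
        rw [derivative_mul, dU, hG, sub_mul, this]
        noncomm_ring
      have h0' : constantCoeff (U * G) = 1 := by
        rw [map_mul, h0, hU, constantCoeff_exp_monomial nx, one_mul]
      obtain ⟨z, hz, h⟩ := ih (U * G) _ hw' hwd' hG' h0'
      obtain ⟨y, hy, h'⟩ := hmul (-x) (neg_mem hxk) z hz
      refine ⟨y, hy, ?_⟩
      rw [← h', ← h, map_mul, hU, evalOne_exp_monomial nx, ← mul_assoc,
        exp_neg_mul_exp_self nx, one_mul]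
  intro G w hw
  refine key (w.natDegree + 1) G w hw fun i hi => ?_
  rw [coeff_eq_zero_of_natDegree_lt hi]
  exact zero_mem _

theorem pathsEndInExp_and_exp_mul_exp (hL : IsNilpotentFiltration L r) (n : ℕ) :
    ∀ k, 1 ≤ k → r ≤ k + n → PathsEndInExp (L k) ∧
      ∀ z ∈ L k, ∀ e ∈ L 1, ∃ y, y - e ∈ L k ∧ exp z * exp e = exp y := by
  induction n with
  | zero =>
    intro k hk hr
    have hbot : L k = ⊥ := le_bot_iff.1 (hL.eq_bot ▸ hL.antitone hr)
    rw [hbot]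
    refine ⟨pathsEndInExp_bot, fun z hz e _ => ⟨e, by simp, ?_⟩⟩
    rw [(Submodule.mem_bot ℚ).1 hz, exp_zero, one_mul]
  | succ n ih =>
    intro k hk hr
    obtain ⟨hpath, habs⟩ := ih (k + 1) (by omega) (by omega)
    have hmul : ∀ z ∈ L k, ∀ e ∈ L 1, ∃ y, y - e ∈ L k ∧ exp z * exp e = exp y := by
      intro z hz e he
      obtain ⟨ζ, hζ, h⟩ := hL.exists_exp_mul_exp_eq hk hpath hz he
      obtain ⟨y, hy, h'⟩ := habs ζ hζ (e + z) (add_mem he (hL.antitone hk hz))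
      refine ⟨y, ?_, h.trans h'⟩
      have := add_mem (hL.antitone (Nat.le_succ k) hy) hz
      convert this using 1
      abel
    refine ⟨hL.pathsEndInExp_of_succ hk hpath fun x hx y hy => ?_, hmul⟩
    obtain ⟨z, hz, h⟩ := hmul x hx y (hL.antitone hk hy)
    exact ⟨z, by simpa using add_mem hz hy, h⟩

theorem pathsEndInExp (hL : IsNilpotentFiltration L r) {k : ℕ} (hk : 1 ≤ k) :
    PathsEndInExp (L k) :=
  (hL.pathsEndInExp_and_exp_mul_exp r k hk (by omega)).1

theorem exists_exp_mul_exp (hL : IsNilpotentFiltration L r) {k : ℕ} (hk : 1 ≤ k) {z e : A}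
    (hz : z ∈ L k) (he : e ∈ L 1) : ∃ y, y - e ∈ L k ∧ exp z * exp e = exp y :=
  (hL.pathsEndInExp_and_exp_mul_exp r k hk (by omega)).2 z hz e he

end IsNilpotentFiltration

/-- Two elements that differ by left multiplication by the exponential of an element of `S`. -/
def ExpEquiv (S : Submodule ℚ A) (g h : A) : Prop :=
  ∃ ζ ∈ S, g = exp ζ * h

namespace ExpEquiv

theorem mono {S T : Submodule ℚ A} (hST : S ≤ T) {g h : A} (hgh : ExpEquiv S g h) :
    ExpEquiv T g h :=
  let ⟨ζ, hζ, e⟩ := hgh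
  ⟨ζ, hST hζ, e⟩

theorem mul_right {S : Submodule ℚ A} {g h : A} (hgh : ExpEquiv S g h) (u : A) :
    ExpEquiv S (g * u) (h * u) := by
  obtain ⟨ζ, hζ, rfl⟩ := hgh
  exact ⟨ζ, hζ, mul_assoc _ _ _⟩

variable {L : ℕ → Submodule ℚ A} {r k : ℕ} (hL : IsNilpotentFiltration L r) (hk : 1 ≤ k)
include hL hk

theorem symm {g h : A} (hgh : ExpEquiv (L k) g h) : ExpEquiv (L k) h g := by
  obtain ⟨ζ, hζ, rfl⟩ := hgh
  refine ⟨-ζ, neg_mem hζ, ?_⟩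
  rw [← mul_assoc, exp_neg_mul_exp_self (hL.isNilpotent_of_mem hk hζ), one_mul]

theorem trans {g h u : A} (hgh : ExpEquiv (L k) g h) (hhu : ExpEquiv (L k) h u) :
    ExpEquiv (L k) g u := by
  obtain ⟨ζ, hζ, rfl⟩ := hgh
  obtain ⟨ξ, hξ, rfl⟩ := hhu
  obtain ⟨y, hy, h⟩ := hL.exists_exp_mul_exp hk hζ (hL.antitone hk hξ)
  exact ⟨y, by simpa using add_mem hy hξ, by rw [← mul_assoc, h]⟩

theorem mul_left {x g h : A} (hx : x ∈ L 1) (hgh : ExpEquiv (L k) g h) :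
    ExpEquiv (L k) (exp x * g) (exp x * h) := by
  obtain ⟨ζ, hζ, rfl⟩ := hgh
  have nx := hL.isNilpotent x hx
  refine ⟨exp x * ζ * exp (-x), ?_, ?_⟩
  · have := add_mem (hL.antitone k.le_succ (hL.conj_sub_mem hx hζ)) hζ
    rwa [sub_add_cancel] at this
  · rw [← exp_conj nx (hL.isNilpotent_of_mem hk hζ), mul_assoc _ (exp (-x)),
      ← mul_assoc (exp (-x)), exp_neg_mul_exp_self nx, one_mul, mul_assoc]

theorem exp_add {x y : A} (hx : x ∈ L k) (hy : y ∈ L 1) :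
    ExpEquiv (L (k + 1)) (exp (x + y)) (exp x * exp y) := by
  refine symm hL (by omega) ?_
  rw [add_comm x y]
  exact hL.exists_exp_mul_exp_eq hk (hL.pathsEndInExp (by omega)) hx hy

theorem exp_mul_comm {x y : A} (hx : x ∈ L k) (hy : y ∈ L 1) :
    ExpEquiv (L (k + 1)) (exp x * exp y) (exp y * exp x) := by
  have hk' : 1 ≤ k + 1 := by omega
  have ny := hL.isNilpotent y hy
  have hx1 := hL.antitone hk hx
  set w := exp y * x * exp (-y) with hw
  have hwx : w - x ∈ L (k + 1) := hL.conj_sub_mem hy hx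
  have hwk : w ∈ L k := by
    simpa using add_mem (hL.antitone k.le_succ hwx) hx
  have h1 : exp y * exp x = exp w * exp y := by
    rw [hw, ← exp_conj ny (hL.isNilpotent x hx1), mul_assoc, exp_neg_mul_exp_self ny, mul_one]
  have h2 : ExpEquiv (L (k + 1)) (exp (w + y)) (exp (x + y)) := by
    have h3 := (exp_add hL hk' hwx (add_mem hx1 hy)).mono (hL.antitone (k + 1).le_succ)
    rw [← add_assoc, sub_add_cancel] at h3
    exact trans hL hk' h3 ⟨w - x, hwx, rfl⟩
  rw [h1]
  exact trans hL hk' (symm hL hk' (exp_add hL hk hx hy))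
    (trans hL hk' (symm hL hk' h2) (exp_add hL hk hwk hy))

theorem exp_add_add {x y z : A} (hx : x ∈ L k) (hy : y ∈ L k) (hz : z ∈ L k) :
    ExpEquiv (L (k + 1)) (exp (x + y + z)) (exp x * exp y * exp z) := by
  have h1 := hL.antitone hk
  rw [add_assoc, mul_assoc]
  exact trans hL (by omega) (exp_add hL hk hx (add_mem (h1 hy) (h1 hz)))
    (mul_left hL (by omega) (h1 hx) (exp_add hL hk hy (h1 hz)))

theorem exp_mul_mul_interleave {x y z u v w : A} (hx : x ∈ L k) (hy : y ∈ L k) (hz : z ∈ L k)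
    (hu : u ∈ L 1) (hv : v ∈ L 1) :
    ExpEquiv (L (k + 1)) (exp x * exp y * exp z * (exp u * exp v * exp w))
      (exp x * exp u * (exp y * exp v) * (exp z * exp w)) := by
  have hk' : 1 ≤ k + 1 := by omega
  have h1 := hL.antitone hk
  have e1 := mul_left hL hk' (h1 hx) (mul_left hL hk' (h1 hy)
    ((exp_mul_comm hL hk hz hu).mul_right (exp v * exp w)))
  have e2 := mul_left hL hk' (h1 hx) ((exp_mul_comm hL hk hy hu).mul_right
    (exp z * exp v * exp w))
  have e3 := mul_left hL hk' (h1 hx) (mul_left hL hk' hu (mul_left hL hk' (h1 hy)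
    ((exp_mul_comm hL hk hz hv).mul_right (exp w))))
  simp only [mul_assoc] at e1 e2 e3 ⊢
  exact trans hL hk' e1 (trans hL hk' e2 e3)

end ExpEquiv

theorem IsNilpotentFiltration.exists_exp_eq_mul_mul {L Fa Fb Fc : ℕ → Submodule ℚ A} {r : ℕ}
    (hL : IsNilpotentFiltration L r) (ha : IsNilpotentFiltration Fa r)
    (hb : IsNilpotentFiltration Fb r) (hc : IsNilpotentFiltration Fc r)
    (hsup : ∀ k, 1 ≤ k → Fa k ⊔ Fb k ⊔ Fc k = L k) {x y z : A} (hx : x ∈ Fa 1) (hy : y ∈ Fb 1)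
    (hz : z ∈ Fc 1) :
    ∃ u ∈ Fa 1, ∃ v ∈ Fb 1, ∃ w ∈ Fc 1, u - x ∈ Fa 2 ∧ v - y ∈ Fb 2 ∧ w - z ∈ Fc 2 ∧
      exp (x + y + z) = exp u * exp v * exp w := by
  have hle (k : ℕ) (hk : 1 ≤ k) : Fa k ≤ L k ∧ Fb k ≤ L k ∧ Fc k ≤ L k := by
    rw [← hsup k hk]
    exact ⟨le_sup_left.trans le_sup_left, le_sup_right.trans le_sup_left, le_sup_right⟩
  obtain ⟨la, lb, lc⟩ := hle 1 le_rfl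
  have key : ∀ n : ℕ, ∃ u ∈ Fa 1, ∃ v ∈ Fb 1, ∃ w ∈ Fc 1,
      u - x ∈ Fa 2 ∧ v - y ∈ Fb 2 ∧ w - z ∈ Fc 2 ∧
      ExpEquiv (L (n + 2)) (exp (x + y + z)) (exp u * exp v * exp w) := by
    intro n
    induction n with
    | zero =>
      refine ⟨x, hx, y, hy, z, hz, by simp, by simp, by simp, ?_⟩
      exact ExpEquiv.exp_add_add hL le_rfl (la hx) (lb hy) (lc hz)
    | succ n ih =>
      obtain ⟨u, hu, v, hv, w, hw, hux, hvy, hwz, δ, hδ, h⟩ := ih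
      have hk : 1 ≤ n + 2 := by omega
      rw [← hsup _ hk] at hδ
      obtain ⟨s, hs, δc, hδc, rfl⟩ := Submodule.mem_sup.1 hδ
      obtain ⟨δa, hδa, δb, hδb, rfl⟩ := Submodule.mem_sup.1 hs
      obtain ⟨ka, kb, kc⟩ := hle _ hk
      obtain ⟨u', hu', hU⟩ := ha.exists_exp_mul_exp hk hδa hu
      obtain ⟨v', hv', hV⟩ := hb.exists_exp_mul_exp hk hδb hv
      obtain ⟨w', hw', hW⟩ := hc.exists_exp_mul_exp hk hδc hw
      refine ⟨u', ?_, v', ?_, w', ?_, ?_, ?_, ?_, ?_⟩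
      · simpa using add_mem (ha.antitone hk hu') hu
      · simpa using add_mem (hb.antitone hk hv') hv
      · simpa using add_mem (hc.antitone hk hw') hw
      · simpa using add_mem (ha.antitone (Nat.le_add_left 2 n) hu') hux
      · simpa using add_mem (hb.antitone (Nat.le_add_left 2 n) hv') hvy
      · simpa using add_mem (hc.antitone (Nat.le_add_left 2 n) hw') hwz
      · rw [h, ← hU, ← hV, ← hW]
        exact ExpEquiv.trans hL (by omega)
          ((ExpEquiv.exp_add_add hL hk (ka hδa) (kb hδb) (kc hδc)).mul_right _)
          (ExpEquiv.exp_mul_mul_interleave hL hk (ka hδa) (kb hδb) (kc hδc) (la hu) (lb hv))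
  obtain ⟨u, hu, v, hv, w, hw, hux, hvy, hwz, δ, hδ, h⟩ := key r
  refine ⟨u, hu, v, hv, w, hw, hux, hvy, hwz, ?_⟩
  have hbot : δ ∈ L r := hL.antitone (by omega) hδ
  rw [hL.eq_bot, Submodule.mem_bot] at hbot
  rw [h, hbot, exp_zero, one_mul]

end PolynomialPaths

theorem pow_finrank_eq_zero {K V : Type*} [Field K] [AddCommGroup V] [Module K V]
    [FiniteDimensional K V] {f : Module.End K V} (hf : IsNilpotent f) :
    f ^ Module.finrank K V = 0 := by
  obtain ⟨k, hk⟩ := hf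
  rw [← LinearMap.ker_eq_top, eq_top_iff]
  refine le_trans ?_ (Module.End.ker_pow_le_ker_pow_finrank f k)
  rw [hk, LinearMap.ker_zero]

theorem expNil_eq_exp {V : Type*} [AddCommGroup V] [Module ℂ V] [FiniteDimensional ℂ V]
    [Algebra ℚ (Module.End ℂ V)] {α : Module.End ℂ V} (hα : IsNilpotent α) :
    expNil α = exp α := by
  have h : α ^ (Module.finrank ℂ V + 1) = 0 :=
    pow_eq_zero_of_le (Nat.le_succ _) (pow_finrank_eq_zero hα)
  rw [exp_eq_sum h, expNil]
  refine Finset.sum_congr rfl fun i _ => ?_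
  exact inv_natCast_smul_eq ℂ ℚ _ _

/-- CBH three-factor decomposition in a nilpotent Lie algebra `g = Lie_{-1}` of nilpotent
endomorphisms, with a chain of ideals `Lie_{-1} ⊇ Lie_{-2} ⊇ ⋯ ⊇ Lie_{-r} = 0`,
`[Lie_{-p}, Lie_{-q}] ⊆ Lie_{-p-q}`, and a vector space decomposition `g = a ⊕ b ⊕ c`
into Lie subalgebras compatible with the filtration: every `exp(α)`, `α ∈ g`, factors as
`exp(γ)exp(λ)exp(φ)` with `γ ∈ a`, `λ ∈ b`, `φ ∈ c`, and `γ ≡ π_a(α)`, `λ ≡ π_b(α)`,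
`φ ≡ π_c(α)` modulo `Lie_{-2}`. -/
theorem cbh_three_factor {V : Type*} [AddCommGroup V] [Module ℂ V] [FiniteDimensional ℂ V]
    (L : ℕ → Submodule ℂ (Module.End ℂ V)) (r : ℕ)
    (hnil : ∀ x ∈ L 1, IsNilpotent x)
    (hanti : ∀ p q : ℕ, p ≤ q → L q ≤ L p)
    (hr : L r = ⊥)
    (hbr : ∀ p q : ℕ, ∀ x ∈ L p, ∀ y ∈ L q, ⁅x, y⁆ ∈ L (p + q))
    (a b c : Submodule ℂ (Module.End ℂ V))
    (hsub_a : ∀ x ∈ a, ∀ y ∈ a, ⁅x, y⁆ ∈ a)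
    (hsub_b : ∀ x ∈ b, ∀ y ∈ b, ⁅x, y⁆ ∈ b)
    (hsub_c : ∀ x ∈ c, ∀ y ∈ c, ⁅x, y⁆ ∈ c)
    (hcompat : ∀ k : ℕ, 1 ≤ k → (a ⊓ L k) ⊔ (b ⊓ L k) ⊔ (c ⊓ L k) = L k)
    (hd1 : Disjoint a (b ⊔ c)) (hd2 : Disjoint b c) :
    ∀ α ∈ L 1, ∃ γ ∈ a, ∃ lam ∈ b, ∃ φ ∈ c,
      expNil α = expNil γ * expNil lam * expNil φ ∧
      ∀ αa αb αc : Module.End ℂ V, αa ∈ a → αb ∈ b → αc ∈ c → α = αa + αb + αc →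
        γ - αa ∈ L 2 ∧ lam - αb ∈ L 2 ∧ φ - αc ∈ L 2 := by
  let _ : Algebra ℚ (Module.End ℂ V) := Algebra.compHom _ (algebraMap ℚ ℂ)
  have _ : IsScalarTower ℚ ℂ (Module.End ℂ V) := IsScalarTower.of_algebraMap_eq fun _ => rfl
  have filtration (d : Submodule ℂ (Module.End ℂ V)) (hd : ∀ x ∈ d, ∀ y ∈ d, ⁅x, y⁆ ∈ d) :
      IsNilpotentFiltration (fun k => (d ⊓ L k).restrictScalars ℚ) r :=
    { isNilpotent := fun x hx => hnil x hx.2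
      antitone := fun p q hpq => inf_le_inf_left d (hanti p q hpq)
      eq_bot := by simp [hr]
      commutator_mem := fun p q x hx y hy =>
        ⟨hd x hx.1 y hy.1, hbr p q x hx.2 y hy.2⟩ }
  have hL : IsNilpotentFiltration (fun k => (L k).restrictScalars ℚ) r := by
    simpa using filtration ⊤ fun _ _ _ _ => Submodule.mem_top
  intro α hα
  have hα' := hα
  rw [← hcompat 1 le_rfl] at hα'
  obtain ⟨s, hs, z, hz, rfl⟩ := Submodule.mem_sup.1 hα'
  obtain ⟨x, hx, y, hy, rfl⟩ := Submodule.mem_sup.1 hs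
  obtain ⟨u, hu, v, hv, w, hw, hux, hvy, hwz, h⟩ :=
    hL.exists_exp_eq_mul_mul (filtration a hsub_a) (filtration b hsub_b) (filtration c hsub_c)
      (fun k hk => by
        rw [← Submodule.restrictScalars_sup, ← Submodule.restrictScalars_sup, hcompat k hk])
      hx hy hz
  refine ⟨u, hu.1, v, hv.1, w, hw.1, ?_, fun x' y' z' hx' hy' hz' hsum => ?_⟩
  · rw [expNil_eq_exp (hnil _ hα), expNil_eq_exp (hnil u hu.2), expNil_eq_exp (hnil v hv.2),
      expNil_eq_exp (hnil w hw.2), h]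
  · have e1 : x - x' = 0 := by
      refine Submodule.disjoint_def.1 hd1 _ (sub_mem hx.1 hx') ?_
      have : x - x' = (y' - y) + (z' - z) := by
        rw [← sub_eq_zero, ← sub_eq_zero.2 hsum]
        abel
      rw [this]
      exact Submodule.add_mem_sup (sub_mem hy' hy.1) (sub_mem hz' hz.1)
    obtain rfl := sub_eq_zero.1 e1
    have e2 : y - y' = 0 := by
      refine Submodule.disjoint_def.1 hd2 _ (sub_mem hy.1 hy') ?_
      have : y - y' = z' - z := by
        rw [← sub_eq_zero, ← sub_eq_zero.2 hsum]
        abel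
      rw [this]
      exact sub_mem hz' hz.1
    obtain rfl := sub_eq_zero.1 e2
    obtain rfl := add_left_cancel hsum
    exact ⟨hux.2, hvy.2, hwz.2⟩
end
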